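/- arXiv:2512.00500 — 2 statements merged into one kernel-verified Lean document; each statement's English description precedes it below -/
import Mathlib

section
/- For every k ∈ ℕ, every finite set H of discounting sequences, and every finite set W ⊆ [0,1], every non-increasing sequence (u_n) of real numbers with all values in V_{k,H,W} either converges to 0 or is eventually constant (stationary). -/
open Set

noncomputable section

/-- A discounting sequence: strictly decreasing, with values in `[0,1]` and limit `0`. -/
def IsDiscounting (η : ℕ → ℝ) : Prop :=
  StrictAnti η ∧ (∀ i, η i ∈ Set.Icc (0:ℝ) 1) ∧
    Filter.Tendsto η Filter.atTop (nhds 0)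

/-- The set
`V_{k,H,W} = {0,1} ∪ W ∪ {w·∏_{ℓ=1}^{k'} η^{(ℓ)}_{i_ℓ} : w ∈ W, k' ≤ k, i_ℓ ∈ ℕ, η^{(ℓ)} ∈ H}`. -/
def Vset (k : ℕ) (H : Set (ℕ → ℝ)) (W : Set ℝ) : Set ℝ :=
  {0, 1} ∪ W ∪
    {x | ∃ w ∈ W, ∃ k' ≤ k, ∃ idx : Fin k' → ℕ, ∃ e : Fin k' → (ℕ → ℝ),
      (∀ ℓ, e ℓ ∈ H) ∧ x = w * ∏ ℓ : Fin k', e ℓ (idx ℓ)}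

/-- A discounting sequence takes only finitely many values above any positive threshold. -/
lemma IsDiscounting.finite_range_inter_Ici {η : ℕ → ℝ} (hη : IsDiscounting η) {ε : ℝ}
    (hε : 0 < ε) : (Set.range η ∩ Set.Ici ε).Finite := by
  obtain ⟨N, hN⟩ := Filter.eventually_atTop.1 (hη.2.2.eventually (gt_mem_nhds hε))
  refine ((Set.finite_Iio N).image η).subset ?_
  rintro _ ⟨⟨i, rfl⟩, hi⟩
  exact ⟨i, lt_of_not_ge fun h => (hN i h).not_ge hi, rfl⟩

/-- A product of numbers in `[0,1]` is at most each of its factors. -/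
lemma prod_le_of_mem_Icc {ι : Type*} [Fintype ι] {f : ι → ℝ}
    (hf : ∀ i, f i ∈ Set.Icc (0:ℝ) 1) (i : ι) : ∏ j, f j ≤ f i := by
  classical
  rw [← Finset.mul_prod_erase Finset.univ f (Finset.mem_univ i)]
  exact mul_le_of_le_one_right (hf i).1
    (Finset.prod_le_one (fun j _ => (hf j).1) fun j _ => (hf j).2)

lemma Vset_nonneg {k : ℕ} {H : Set (ℕ → ℝ)} {W : Set ℝ} (hH : ∀ η ∈ H, IsDiscounting η)
    (hW : W ⊆ Set.Icc (0:ℝ) 1) {x : ℝ} (hx : x ∈ Vset k H W) : 0 ≤ x := by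
  rcases hx with ((rfl | rfl) | hx) | ⟨w, hw, k', -, idx, e, he, rfl⟩
  · exact le_rfl
  · exact zero_le_one
  · exact (hW hx).1
  · exact mul_nonneg (hW hw).1
      (Finset.prod_nonneg fun l _ => ((hH _ (he l)).2.1 (idx l)).1)

/-- `V_{k,H,W}` has only finitely many elements above any positive threshold. -/
lemma finite_Vset_inter_Ici (k : ℕ) {H : Set (ℕ → ℝ)} {W : Set ℝ} (hHfin : H.Finite)
    (hH : ∀ η ∈ H, IsDiscounting η) (hWfin : W.Finite) (hW : W ⊆ Set.Icc (0:ℝ) 1)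
    {ε : ℝ} (hε : 0 < ε) : (Vset k H W ∩ Set.Ici ε).Finite := by
  set F : Set ℝ := ⋃ η ∈ H, Set.range η ∩ Set.Ici ε
  have hF : F.Finite := hHfin.biUnion fun η hη => (hH η hη).finite_range_inter_Ici hε
  have hprod : (⋃ k' ∈ Set.Iic k, (fun p : ℝ × (Fin k' → ℝ) => p.1 * ∏ l, p.2 l) ''
      (W ×ˢ Set.univ.pi fun _ => F)).Finite :=
    (Set.finite_Iic k).biUnion fun k' _ => (hWfin.prod (Set.Finite.pi fun _ => hF)).image _
  refine (((Set.toFinite {0, 1}).union hWfin).union hprod).subset ?_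
  rintro x ⟨hx | ⟨w, hw, k', hk', idx, e, he, rfl⟩, hxε⟩
  · exact Or.inl hx
  · have hmem : ∀ l, e l (idx l) ∈ Set.Icc (0:ℝ) 1 := fun l => (hH _ (he l)).2.1 (idx l)
    refine Or.inr (Set.mem_biUnion hk' ⟨(w, fun l => e l (idx l)), ⟨hw, fun l _ => ?_⟩, rfl⟩)
    refine Set.mem_biUnion (he l) ⟨⟨idx l, rfl⟩, ?_⟩
    calc ε ≤ w * ∏ j, e j (idx j) := hxε
      _ ≤ ∏ j, e j (idx j) :=
        mul_le_of_le_one_left (Finset.prod_nonneg fun j _ => (hmem j).1) (hW hw).2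
      _ ≤ e l (idx l) := prod_le_of_mem_Icc hmem l

/-- An antitone sequence with finitely many values is eventually constant. -/
lemma Antitone.eventually_const_of_finite_range {α : Type*} [LinearOrder α] {u : ℕ → α}
    (hu : Antitone u) (h : (Set.range u).Finite) : ∃ N, ∀ n, N ≤ n → u n = u N := by
  obtain ⟨_, ⟨N, rfl⟩, hN⟩ := Set.exists_min_image _ id h (Set.range_nonempty u)
  exact ⟨N, fun n hn => le_antisymm (hu hn) (hN _ ⟨n, rfl⟩)⟩

/-- Every non-increasing real sequence with values in `V_{k,H,W}` either
converges to `0` or is eventually constant. -/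
theorem stmt_10 (k : ℕ) (H : Set (ℕ → ℝ)) (hHfin : H.Finite)
    (hH : ∀ η ∈ H, IsDiscounting η)
    (W : Set ℝ) (hWfin : W.Finite) (hWsub : W ⊆ Set.Icc (0:ℝ) 1)
    (u : ℕ → ℝ) (hu : Antitone u) (hmem : ∀ n, u n ∈ Vset k H W) :
    Filter.Tendsto u Filter.atTop (nhds 0) ∨ ∃ N, ∀ n, N ≤ n → u n = u N := by
  have hnonneg : ∀ n, 0 ≤ u n := fun n => Vset_nonneg hH hWsub (hmem n)
  have hbdd : BddBelow (Set.range u) := ⟨0, by rintro _ ⟨n, rfl⟩; exact hnonneg n⟩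
  have hlim := tendsto_atTop_ciInf hu hbdd
  rcases (le_ciInf hnonneg).eq_or_lt with h | h
  · exact Or.inl (h ▸ hlim)
  · refine Or.inr (hu.eventually_const_of_finite_range ?_)
    refine (finite_Vset_inter_Ici k hHfin hH hWfin hWsub h).subset ?_
    rintro _ ⟨n, rfl⟩
    exact ⟨hmem n, ciInf_le hbdd n⟩

end
end

section
/- Let η be a discounting sequence, p ∈ AP, and let φ be the quantifier-free HyperLTL_temp formula G(F_η p_π) ∨ F G ¬p_π, evaluated on a single trace t (via the assignment π ↦ t). Then there exist Boolean lassos with satisfaction value arbitrarily close to 0: for every ε > 0 there exists a Boolean lasso trace t with 0 < ⟦φ⟧(t) < ε. -/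
open Set

noncomputable section

/-- A (weighted) trace assigns to each time step and atomic proposition a weight in `[0,1]`. -/
abbrev Trace (AP : Type) : Type := ℕ → AP → unitInterval

/-- Boolean traces: all weights are `0` or `1`. -/
def IsBoolTrace {AP : Type} (t : Trace AP) : Prop :=
  ∀ i p, (t i p : ℝ) = 0 ∨ (t i p : ℝ) = 1

/-- Lassos: eventually periodic traces, i.e. traces of the form `u·v^ω`. -/
def IsLasso {AP : Type} (t : Trace AP) : Prop :=
  ∃ N c : ℕ, 0 < c ∧ ∀ n, N ≤ n → t (n + c) = t n

/-- Shifting a trace assignment: `Π[i,∞]`. -/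
def shiftA {AP Var : Type} (ρ : Var → Trace AP) (i : ℕ) : Var → Trace AP :=
  fun π n => ρ π (n + i)

/-- `prefMin g i = min_{0 ≤ j < i} g j` (with the empty minimum being `1`). -/
def prefMin (g : ℕ → ℝ) : ℕ → ℝ
  | 0 => 1
  | n + 1 => min (prefMin g n) (g n)

/-- Quantifier-free HyperLTL_temp formulas, over a set `D` (indexing the discounting
sequences). -/
inductive TQF (AP Var D : Type) : Type where
  | atom : AP → Var → TQF AP Var D
  | neg : TQF AP Var D → TQF AP Var D
  | or : TQF AP Var D → TQF AP Var D → TQF AP Var D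
  | next : TQF AP Var D → TQF AP Var D
  | untl : TQF AP Var D → TQF AP Var D → TQF AP Var D
  | untlD : D → TQF AP Var D → TQF AP Var D → TQF AP Var D

/-- HyperLTL_temp formulas: a prefix of quantifiers over a quantifier-free formula. -/
inductive TForm (AP Var D : Type) : Type where
  | qf : TQF AP Var D → TForm AP Var D
  | ex : Var → TForm AP Var D → TForm AP Var D
  | all : Var → TForm AP Var D → TForm AP Var D

variable {AP Var D : Type}

/-- Satisfaction value of quantifier-free HyperLTL_temp formulas, where `η` interprets the
discounting sequence indices. -/
def tsemQF (η : D → ℕ → ℝ) : TQF AP Var D → (Var → Trace AP) → Set (Trace AP) → ℝ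
  | .atom p π, ρ, _ => (ρ π 0 p : ℝ)
  | .neg φ, ρ, T => 1 - tsemQF η φ ρ T
  | .or φ₁ φ₂, ρ, T => max (tsemQF η φ₁ ρ T) (tsemQF η φ₂ ρ T)
  | .next φ, ρ, T => tsemQF η φ (shiftA ρ 1) T
  | .untl φ₁ φ₂, ρ, T =>
      ⨆ i : ℕ, min (tsemQF η φ₂ (shiftA ρ i) T)
        (prefMin (fun j => tsemQF η φ₁ (shiftA ρ j) T) i)
  | .untlD d φ₁ φ₂, ρ, T =>
      ⨆ i : ℕ, min (η d i * tsemQF η φ₂ (shiftA ρ i) T)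
        (prefMin (fun j => η d j * tsemQF η φ₁ (shiftA ρ j) T) i)


/-- The formula `true = p_π ∨ ¬ p_π`. -/
def ttF (p : AP) : TQF AP Unit Unit := .or (.atom p ()) (.neg (.atom p ()))

/-- The eventually operator `F φ = true U φ`. -/
def Fop (p : AP) (φ : TQF AP Unit Unit) : TQF AP Unit Unit := .untl (ttF p) φ

/-- The globally operator `G φ = ¬ F ¬ φ`. -/
def Gop (p : AP) (φ : TQF AP Unit Unit) : TQF AP Unit Unit := .neg (Fop p (.neg φ))

/-- The discounted eventually operator `F_η φ = true U_η φ`. -/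
def FdOp (p : AP) (φ : TQF AP Unit Unit) : TQF AP Unit Unit := .untlD () (ttF p) φ

/-- The formula `φ = G (F_η p_π) ∨ F G ¬ p_π`. -/
def exForm (p : AP) : TQF AP Unit Unit :=
  .or (Gop p (FdOp p (.atom p ()))) (Fop p (Gop p (.neg (.atom p ()))))

/-- The satisfaction value `⟦φ⟧(t)` of `φ = G (F_η p_π) ∨ F G ¬ p_π` on a single trace. -/
def tval {AP : Type} (η : ℕ → ℝ) (p : AP) (t : Trace AP) : ℝ :=
  tsemQF (fun _ : Unit => η) (exForm p) (fun _ : Unit => t) Set.univ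

/-- An assignment of a single trace on which `p` only takes the values `0` and `1`. -/
def IsBoolAt (p : AP) (ρ : Unit → Trace AP) : Prop :=
  ∀ i, (ρ () i p : ℝ) = 0 ∨ (ρ () i p : ℝ) = 1

lemma IsBoolAt.shiftA {p : AP} {ρ : Unit → Trace AP} (h : IsBoolAt p ρ) (k : ℕ) :
    IsBoolAt p (shiftA ρ k) := fun i => h (i + k)

lemma prefMin_const_one (i : ℕ) : prefMin (fun _ => 1) i = 1 := by
  induction i with
  | zero => rfl
  | succ n ih => simp [prefMin, ih]

lemma le_prefMin {η : ℕ → ℝ} (hη : Antitone η) (h1 : ∀ i, η i ≤ 1) (i : ℕ) :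
    η i ≤ prefMin η i := by
  induction i with
  | zero => exact h1 0
  | succ n ih =>
    have hn : η (n + 1) ≤ η n := hη n.le_succ
    exact le_min (hn.trans ih) hn

lemma tsemQF_ttF (η : Unit → ℕ → ℝ) {p : AP} {ρ : Unit → Trace AP} (h : IsBoolAt p ρ)
    (T : Set (Trace AP)) : tsemQF η (ttF p) ρ T = 1 := by
  rcases h 0 with h | h <;> simp [ttF, tsemQF, h]

lemma tsemQF_Fop (η : Unit → ℕ → ℝ) {p : AP} {ρ : Unit → Trace AP} (h : IsBoolAt p ρ)
    (φ : TQF AP Unit Unit) (T : Set (Trace AP)) :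
    tsemQF η (Fop p φ) ρ T = ⨆ i : ℕ, min (tsemQF η φ (shiftA ρ i) T) 1 := by
  simp [Fop, tsemQF, tsemQF_ttF η (h.shiftA _), prefMin_const_one]

lemma tsemQF_FdOp_atom {η : ℕ → ℝ} (hη : IsDiscounting η) {p : AP} {ρ : Unit → Trace AP}
    (h : IsBoolAt p ρ) (T : Set (Trace AP)) :
    tsemQF (fun _ => η) (FdOp p (.atom p ())) ρ T = ⨆ i : ℕ, η i * (ρ () i p : ℝ) := by
  obtain ⟨hanti, hmem, -⟩ := hη
  simp only [FdOp, tsemQF, tsemQF_ttF _ (h.shiftA _), mul_one]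
  congr 1
  funext i
  have hle : η i * (ρ () i p : ℝ) ≤ prefMin η i :=
    (mul_le_of_le_one_right (hmem i).1 (ρ () i p).2.2).trans
      (le_prefMin hanti.antitone (fun i => (hmem i).2) i)
  simpa [shiftA] using hle

/-- `G φ` is at least any lower bound of `φ` along the trace. -/
lemma le_tsemQF_Gop (η : Unit → ℕ → ℝ) {p : AP} {ρ : Unit → Trace AP} (h : IsBoolAt p ρ)
    {φ : TQF AP Unit Unit} {T : Set (Trace AP)} {c : ℝ}
    (hc : ∀ i, c ≤ tsemQF η φ (shiftA ρ i) T) : c ≤ tsemQF η (Gop p φ) ρ T := by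
  rw [Gop, tsemQF, tsemQF_Fop η h, le_sub_comm]
  refine ciSup_le fun i => (min_le_left _ _).trans ?_
  rw [tsemQF]
  linarith [hc i]

/-- `G φ` is at most any nonnegative upper bound of `φ` at some position. -/
lemma tsemQF_Gop_le (η : Unit → ℕ → ℝ) {p : AP} {ρ : Unit → Trace AP} (h : IsBoolAt p ρ)
    {φ : TQF AP Unit Unit} {T : Set (Trace AP)} (i : ℕ) {c : ℝ} (hc0 : 0 ≤ c)
    (hc : tsemQF η φ (shiftA ρ i) T ≤ c) : tsemQF η (Gop p φ) ρ T ≤ c := by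
  rw [Gop, tsemQF, tsemQF_Fop η h, sub_le_comm]
  refine le_ciSup_of_le ⟨1, ?_⟩ i (le_min ?_ (by linarith))
  · rintro _ ⟨j, rfl⟩
    exact min_le_right _ _
  · rw [tsemQF]
    linarith

/-- The trace on which every proposition holds exactly at the positions `≡ N` mod `N + 1`. -/
def periodicTrace (AP : Type) (N : ℕ) : Trace AP :=
  fun n _ => if n % (N + 1) = N then 1 else 0

lemma isBoolTrace_periodicTrace (N : ℕ) : IsBoolTrace (periodicTrace AP N) := by
  intro i p
  unfold periodicTrace
  split_ifs <;> simp

lemma isLasso_periodicTrace (N : ℕ) : IsLasso (periodicTrace AP N) :=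
  ⟨0, N + 1, N.succ_pos, fun n _ => by funext q; simp [periodicTrace]⟩

lemma exists_periodicTrace_eq_one (N k : ℕ) (p : AP) :
    ∃ d ≤ N, (periodicTrace AP N (d + k) p : ℝ) = 1 := by
  refine ⟨N - k % (N + 1), Nat.sub_le _ _, ?_⟩
  have hk : k % (N + 1) ≤ N := Nat.lt_succ_iff.mp (Nat.mod_lt _ N.succ_pos)
  have hmod : (N - k % (N + 1) + k) % (N + 1) = N := by
    rw [Nat.add_mod, Nat.mod_eq_of_lt (a := N - k % (N + 1)) (by omega),
      Nat.sub_add_cancel hk, Nat.mod_eq_of_lt N.lt_succ_self]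
  simp [periodicTrace, hmod]

lemma periodicTrace_eq_zero {N n : ℕ} (hn : n < N) (p : AP) :
    (periodicTrace AP N n p : ℝ) = 0 := by
  have : n % (N + 1) ≠ N := by
    rw [Nat.mod_eq_of_lt (by omega)]
    omega
  simp [periodicTrace, this]

lemma tval_periodicTrace {η : ℕ → ℝ} (hη : IsDiscounting η) (p : AP) (N : ℕ) :
    tval η p (periodicTrace AP N) = η N := by
  have hB : IsBoolAt p (fun _ : Unit => periodicTrace AP N) :=
    fun i => isBoolTrace_periodicTrace N i p
  have hbound (ρ : Unit → Trace AP) (i : ℕ) : η i * (ρ () i p : ℝ) ≤ η i :=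
    mul_le_of_le_one_right (hη.2.1 i).1 (ρ () i p).2.2
  have hG : tsemQF (fun _ : Unit => η) (Gop p (FdOp p (.atom p ())))
      (fun _ => periodicTrace AP N) Set.univ = η N := by
    apply le_antisymm
    · refine tsemQF_Gop_le _ hB 0 (hη.2.1 N).1 ?_
      rw [tsemQF_FdOp_atom hη (hB.shiftA 0)]
      refine ciSup_le fun i => ?_
      rcases lt_or_ge i N with hi | hi
      · have : (shiftA (fun _ : Unit => periodicTrace AP N) 0 () i p : ℝ) = 0 :=
          periodicTrace_eq_zero hi p
        rw [this, mul_zero]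
        exact (hη.2.1 N).1
      · exact (hbound _ i).trans (hη.1.antitone hi)
    · refine le_tsemQF_Gop _ hB fun k => ?_
      rw [tsemQF_FdOp_atom hη (hB.shiftA k)]
      obtain ⟨d, hd, h1⟩ := exists_periodicTrace_eq_one N k p
      refine le_ciSup_of_le ⟨1, ?_⟩ d ?_
      · rintro _ ⟨j, rfl⟩
        exact (hbound _ j).trans (hη.2.1 j).2
      · have : (shiftA (fun _ : Unit => periodicTrace AP N) k () d p : ℝ) = 1 := h1
        rw [this, mul_one]
        exact hη.1.antitone hd
  have hF : tsemQF (fun _ : Unit => η) (Fop p (Gop p (.neg (.atom p ()))))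
      (fun _ => periodicTrace AP N) Set.univ ≤ 0 := by
    rw [tsemQF_Fop _ hB]
    refine ciSup_le fun k => (min_le_left _ _).trans ?_
    obtain ⟨d, -, h1⟩ := exists_periodicTrace_eq_one N k p
    refine tsemQF_Gop_le _ (hB.shiftA k) d le_rfl ?_
    simp [tsemQF, shiftA, h1]
  rw [tval, exForm, tsemQF, hG]
  exact max_eq_left (hF.trans (hη.2.1 N).1)

/-- For the formula `φ = G (F_η p) ∨ F G ¬ p`, there exist Boolean lassos
with satisfaction value arbitrarily close to `0` (but positive). -/
theorem stmt_14 {AP : Type} (η : ℕ → ℝ) (hη : IsDiscounting η) (p : AP)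
    (ε : ℝ) (hε : 0 < ε) :
    ∃ t : Trace AP, IsBoolTrace t ∧ IsLasso t ∧ 0 < tval η p t ∧ tval η p t < ε := by
  obtain ⟨N, hN⟩ := (hη.2.2.eventually (gt_mem_nhds hε)).exists
  refine ⟨periodicTrace AP N, isBoolTrace_periodicTrace N, isLasso_periodicTrace N, ?_⟩
  rw [tval_periodicTrace hη]
  exact ⟨(hη.2.1 (N + 1)).1.trans_lt (hη.1 N.lt_succ_self), hN⟩

end
end
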